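/- arXiv:1811.03117 — 2 statements merged into one kernel-verified Lean document; each statement's English description precedes it below -/
import Mathlib

section
/- Let m and n be integers with |m| ≥ 3 and |n| ≥ 3, and let G = BS(m,n). For every g ∈ G with g ∉ ⟨a⟩, there exist two elements of the subgroup of G generated by a and g which freely generate a free subgroup of rank 2. -/
/-- The defining relator set of the Baumslag–Solitar group `BS(m, n)`:
`a` is indexed by `false`, `t` by `true`. -/
def bsRels (m n : ℤ) : Set (FreeGroup Bool) :=
  {FreeGroup.of true * FreeGroup.of false ^ m * (FreeGroup.of true)⁻¹ * (FreeGroup.of false ^ n)⁻¹}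

/-- The Baumslag–Solitar group `BS(m, n) = ⟨a, t ∣ t a^m t⁻¹ = a^n⟩`. -/
abbrev BS (m n : ℤ) := PresentedGroup (bsRels m n)

/-- The generator `a` of `BS(m, n)`. -/
def BS.a (m n : ℤ) : BS m n := PresentedGroup.of false

/-- The generator `t` of `BS(m, n)`. -/
def BS.t (m n : ℤ) : BS m n := PresentedGroup.of true
/-- `x` and `y` freely generate a free subgroup of rank 2: the homomorphism from the
free group on two generators sending the generators to `x` and `y` is injective. -/
def FreelyGenerateF2 {G : Type*} [Group G] (x y : G) : Prop :=
  Function.Injective (FreeGroup.lift (fun b : Bool => if b then x else y) : FreeGroup Bool →* G)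

/-!
`BS(m, n)` is an HNN extension of `⟨a⟩ ≅ ℤ`, so it acts on its Bass–Serre tree, here replaced by the
normal words. If no conjugate of `c ^ 2` in the base group lies in an edge group, then `c` and
`c ^ 2` move every half-tree at the base vertex off itself. An element `g` outside the base group
moves the base vertex, so it maps the complement of some half-tree `V` at the base vertex into such
a half-tree `U`. Hence `c` and `c ^ 2` displace `U`, while `h = g c g⁻¹` and `h ^ 2` displace the
complement of `U`, and ping-pong with the translates of `U` and `Uᶜ` by `c`, `c⁻¹`, `h`, `h⁻¹` shows
that `c h c` and `h c h` are free generators.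
-/

open HNNExtension HNNExtension.NormalWord Subgroup Multiplicative
open scoped Pointwise

universe u

section PingPong

namespace FreelyGenerateF2

theorem of_map {G H : Type*} [Group G] [Group H] (F : G →* H) {x y : G}
    (h : FreelyGenerateF2 (F x) (F y)) : FreelyGenerateF2 x y := by
  have hcomp : FreeGroup.lift (fun b : Bool => if b then F x else F y) =
      F.comp (FreeGroup.lift (fun b : Bool => if b then x else y)) := by
    ext b
    cases b <;> simp
  rw [FreelyGenerateF2, hcomp, MonoidHom.coe_comp] at h
  exact h.of_comp

variable {G : Type u} {α : Type*} [Group G] [MulAction G α]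

theorem of_pingPong {x y : G} {X₁ Y₁ X₂ Y₂ : Set α}
    (hX₁ : X₁.Nonempty) (hX₂ : X₂.Nonempty) (hX : Disjoint X₁ X₂) (hY : Disjoint Y₁ Y₂)
    (h₁₁ : Disjoint X₁ Y₁) (h₁₂ : Disjoint X₁ Y₂) (h₂₁ : Disjoint X₂ Y₁) (h₂₂ : Disjoint X₂ Y₂)
    (hx : x • Y₁ᶜ ⊆ X₁) (hy : y • Y₂ᶜ ⊆ X₂) : FreelyGenerateF2 x y := by
  have inv_smul_compl_subset {z : G} {X Y : Set α} (hz : z • Yᶜ ⊆ X) : z⁻¹ • Xᶜ ⊆ Y := by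
    rw [Set.smul_set_compl, Set.compl_subset_comm, Set.subset_smul_set_iff]
    simpa using hz
  -- Mathlib's ping-pong lemma wants the index type in the universe of the group.
  have hlift : Function.Injective
      (FreeGroup.lift fun i : ULift.{u} Bool => if i.down then x else y) := by
    refine FreeGroup.injective_lift_of_ping_pong _
      (fun i : ULift.{u} Bool => if i.down then X₁ else X₂)
      (fun i : ULift.{u} Bool => if i.down then Y₁ else Y₂) ?_ ?_ ?_ ?_ ?_ ?_
    · rintro ⟨_ | _⟩ <;> simpa
    · rintro ⟨_ | _⟩ ⟨_ | _⟩ hne <;> simp_all [Function.onFun, disjoint_comm]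
    · rintro ⟨_ | _⟩ ⟨_ | _⟩ hne <;> simp_all [Function.onFun, disjoint_comm]
    · rintro ⟨_ | _⟩ ⟨_ | _⟩ <;> simpa
    · rintro ⟨_ | _⟩ <;> simpa
    · rintro ⟨_ | _⟩
      · simpa using inv_smul_compl_subset hy
      · simpa using inv_smul_compl_subset hx
  have hcomp : FreeGroup.lift (fun b : Bool => if b then x else y) =
      (FreeGroup.lift fun i : ULift.{u} Bool => if i.down then x else y).comp
        (FreeGroup.freeGroupCongr Equiv.ulift.symm).toMonoidHom := by
    ext b
    simp
  rw [FreelyGenerateF2, hcomp]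
  exact hlift.comp (MulEquiv.injective _)

theorem of_disjoint_smul [Nonempty α] {c h : G} {U : Set α}
    (hc : Disjoint (c • U) U) (hc₂ : Disjoint (c ^ 2 • U) U)
    (hh : Disjoint (h • Uᶜ) Uᶜ) (hh₂ : Disjoint (h ^ 2 • Uᶜ) Uᶜ) :
    FreelyGenerateF2 (c * h * c) (h * c * h) := by
  have disjoint_inv {z : G} {W : Set α} (hz : Disjoint (z • W) W) : Disjoint (z⁻¹ • W) W := by
    rwa [Set.disjoint_smul_set_left, inv_inv, disjoint_comm]
  have disjoint_smul_inv {z : G} {W : Set α} (hz : Disjoint (z ^ 2 • W) W) :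
      Disjoint (z • W) (z⁻¹ • W) := by
    rwa [Set.disjoint_smul_set_right, inv_inv, smul_smul, ← sq]
  have hcU : c • U ⊆ Uᶜ := hc.subset_compl_right
  have hcU' : c⁻¹ • U ⊆ Uᶜ := (disjoint_inv hc).subset_compl_right
  have hhU : h • Uᶜ ⊆ U := by simpa using hh.subset_compl_right
  have hhU' : h⁻¹ • Uᶜ ⊆ U := by simpa using (disjoint_inv hh).subset_compl_right
  have hU : U.Nonempty := by
    rw [Set.nonempty_iff_ne_empty]
    rintro rfl
    simp at hhU
  have hUc : Uᶜ.Nonempty := (hU.smul_set (a := c)).mono hcU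
  have hUU : Disjoint U Uᶜ := disjoint_compl_right
  refine of_pingPong (X₁ := c • U) (Y₁ := c⁻¹ • U) (X₂ := h • Uᶜ) (Y₂ := h⁻¹ • Uᶜ)
    hU.smul_set hUc.smul_set (hUU.symm.mono hcU hhU) (hUU.symm.mono hcU' hhU')
    (disjoint_smul_inv hc₂) (hUU.symm.mono hcU hhU') (hUU.mono hhU hcU')
    (disjoint_smul_inv hh₂) ?_ ?_
  · rw [← Set.smul_set_compl, smul_smul, mul_inv_cancel_right, mul_smul]
    exact Set.smul_set_mono hhU
  · rw [← Set.smul_set_compl, compl_compl, smul_smul, mul_inv_cancel_right, mul_smul]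
    exact Set.smul_set_mono hcU

theorem of_smul_compl_subset [Nonempty α] {c g : G} {U V : Set α} (hg : g • Vᶜ ⊆ U)
    (hU : Disjoint (c • U) U) (hU₂ : Disjoint (c ^ 2 • U) U)
    (hV : Disjoint (c • V) V) (hV₂ : Disjoint (c ^ 2 • V) V) :
    FreelyGenerateF2 (c * (g * c * g⁻¹) * c) (g * c * g⁻¹ * c * (g * c * g⁻¹)) := by
  have hgU : Uᶜ ⊆ g • V := by rwa [Set.compl_subset_comm, ← Set.smul_set_compl]
  have disjoint_conj {z : G} (hz : Disjoint (z • V) V) :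
      Disjoint ((g * z * g⁻¹) • Uᶜ) Uᶜ := by
    refine Disjoint.mono (Set.smul_set_mono hgU) hgU ?_
    rwa [smul_smul, inv_mul_cancel_right, mul_smul, Set.disjoint_smul_set]
  refine of_disjoint_smul hU hU₂ (disjoint_conj hV) ?_
  rw [conj_pow]
  exact disjoint_conj hV₂

end FreelyGenerateF2

end PingPong

section HNN

variable {G : Type*} [Group G] {A B : Subgroup G} {d : TransversalPair G A B}

/-- The half-tree behind the edge `x t⁻ᵘ` of the Bass–Serre tree at the base vertex, encoded as the
set of normal words which start, up to multiplication of `x` by `toSubgroup A B u` on the right,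
with `x t⁻ᵘ`. -/
def halfTree (d : TransversalPair G A B) (u : ℤˣ) (x : G) : Set (NormalWord d) :=
  {v | Cancels u (x⁻¹ • v)}

variable (φ : A ≃* B)

theorem disjoint_of_smul_halfTree {c x : G} {u : ℤˣ} (hc : x⁻¹ * c * x ∉ toSubgroup A B u) :
    Disjoint ((of c : HNNExtension G A B φ) • halfTree d u x) (halfTree d u x) := by
  rw [Set.disjoint_left]
  rintro _ ⟨v, hv, rfl⟩ hcv
  have hcv' : x⁻¹ * c * x * (x⁻¹ * v.head) ∈ toSubgroup A B u := by
    simpa [of_smul_eq_smul, mul_assoc] using hcv.1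
  exact hc ((Subgroup.mul_mem_cancel_right _ hv.1).1 hcv')

theorem t_zpow_smul_mem_halfTree_one {u : ℤˣ} {v : NormalWord d} :
    (t ^ (u : ℤ) : HNNExtension G A B φ) • v ∈ halfTree d (-u) 1 ↔ v ∉ halfTree d u 1 := by
  simp [halfTree, t_pow_smul_eq_unitsSMul, unitsSMul_cancels_iff]

theorem of_smul_mem_halfTree {g x : G} {u : ℤˣ} {v : NormalWord d} :
    (of g : HNNExtension G A B φ) • v ∈ halfTree d u x ↔ v ∈ halfTree d u (g⁻¹ * x) := by
  simp [halfTree, mul_smul, of_smul_eq_smul]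

theorem notMem_halfTree_one_of_mem {x : G} {u u' : ℤˣ} {v : NormalWord d}
    (hv : v ∈ halfTree d u' x) (hx : x ∈ toSubgroup A B u → u = -u') : v ∉ halfTree d u 1 := by
  rintro ⟨hhead, hsign⟩
  obtain rfl : u = u' := by
    have := hsign.symm.trans hv.2
    simpa using this
  have hxu : x ∈ toSubgroup A B u := by
    have hx' := (mul_mem_cancel_right (by simpa using hhead)).1 hv.1
    simpa using hx'
  simpa using (hx hxu).symm

theorem exists_prod_smul_compl_halfTree_subset (w : NormalWord d) :
    w.prod φ = of w.head ∨
    ∃ u u' x', w.toList.head?.map Prod.fst = some (-u) ∧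
      w.prod φ • (halfTree d u' x')ᶜ ⊆ halfTree d u w.head := by
  simp only [Set.smul_set_subset_iff, Set.mem_compl_iff]
  induction w using consRecOn with
  | ofGroup g => left; simp [ReducedWord.prod]
  | cons g e w hw he ih =>
    right
    have smul_mem {v : NormalWord d} (hv : w.prod φ • v ∉ halfTree d e 1) :
        (cons g e w hw he).prod φ • v ∈ halfTree d (-e) g := by
      rwa [prod_cons, mul_smul, of_smul_mem_halfTree, inv_mul_cancel, mul_smul,
        t_zpow_smul_mem_halfTree_one]
    rcases ih with hprod | ⟨u, u', x', hu, hsubset⟩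
    · refine ⟨-e, e, w.head⁻¹, by simp, fun v hv => smul_mem ?_⟩
      rwa [hprod, of_smul_mem_halfTree, mul_one]
    · exact ⟨-e, u', x', by simp, fun v hv =>
        smul_mem (notMem_halfTree_one_of_mem (hsubset hv) (he _ hu))⟩

theorem exists_smul_compl_halfTree_subset (d : TransversalPair G A B)
    {g : HNNExtension G A B φ} (hg : g ∉ (of : G →* HNNExtension G A B φ).range) :
    ∃ u x u' x', g • (halfTree d u' x')ᶜ ⊆ halfTree d u x := by
  have hw : (g • (empty : NormalWord d)).prod φ = g := by simp
  rcases exists_prod_smul_compl_halfTree_subset φ (g • (empty : NormalWord d)) with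
    hprod | ⟨u, u', x', -, hsubset⟩
  · exact absurd ⟨_, hprod.symm.trans hw⟩ hg
  · exact ⟨u, _, u', x', by rwa [hw] at hsubset⟩

variable {φ}

theorem exists_freelyGenerateF2_mem_closure_of_notMem_range_of {c : G}
    (hA : ∀ x, x⁻¹ * c ^ 2 * x ∉ A) (hB : ∀ x, x⁻¹ * c ^ 2 * x ∉ B)
    {g : HNNExtension G A B φ} (hg : g ∉ (of : G →* HNNExtension G A B φ).range) :
    ∃ x ∈ closure {of c, g}, ∃ y ∈ closure {of c, g}, FreelyGenerateF2 x y := by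
  obtain ⟨d⟩ := TransversalPair.nonempty G A B
  obtain ⟨u, x, u', x', hsubset⟩ := exists_smul_compl_halfTree_subset φ d hg
  have hc₂ (u : ℤˣ) (x : G) : x⁻¹ * c ^ 2 * x ∉ toSubgroup A B u := by
    rcases Int.units_eq_one_or u with rfl | rfl
    exacts [hA x, hB x]
  have hc (u : ℤˣ) (x : G) : x⁻¹ * c * x ∉ toSubgroup A B u := fun h => by
    have hsq : (x⁻¹ * c * x) ^ 2 = x⁻¹ * c ^ 2 * x := by simpa using conj_pow (a := x⁻¹) (b := c)
    exact hc₂ u x (hsq ▸ pow_mem h 2)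
  have displaces (u : ℤˣ) (x : G) := disjoint_of_smul_halfTree (d := d) φ (hc u x)
  have displaces₂ (u : ℤˣ) (x : G) := disjoint_of_smul_halfTree (d := d) φ (hc₂ u x)
  simp only [map_pow] at displaces₂
  have hcmem : of c ∈ closure {of c, g} := mem_closure_of_mem (by simp)
  have hgmem : g ∈ closure {of c, g} := mem_closure_of_mem (by simp)
  have hconj : g * of c * g⁻¹ ∈ closure {of c, g} := mul_mem (mul_mem hgmem hcmem) (inv_mem hgmem)
  exact ⟨_, mul_mem (mul_mem hcmem hconj) hcmem, _, mul_mem (mul_mem hconj hcmem) hconj,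
    .of_smul_compl_subset hsubset (displaces u x) (displaces₂ u x)
      (displaces u' x') (displaces₂ u' x')⟩

end HNN

section ZPowers

theorem orderOf_eq_orderOf_of_eq_one_iff {G H : Type*} [Group G] [Group H] [IsMulTorsionFree G]
    [IsMulTorsionFree H] {x : G} {y : H} (h : x = 1 ↔ y = 1) : orderOf x = orderOf y := by
  by_cases hx : x = 1
  · rw [hx, h.1 hx, orderOf_one, orderOf_one]
  · rw [orderOf_eq_zero (not_isOfFinOrder_of_isMulTorsionFree hx),
      orderOf_eq_zero (not_isOfFinOrder_of_isMulTorsionFree (mt h.2 hx))]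

variable {G H : Type*} [Group G] [Group H] {x : G} {y : H}

/-- The isomorphism `⟨x⟩ ≃* ⟨y⟩` sending `x` to `y`, for `x` and `y` of the same order. -/
noncomputable def zpowersMulEquivOfOrderOfEq (h : orderOf x = orderOf y) :
    zpowers x ≃* zpowers y :=
  mulEquivOfOrderOfEq (g := ⟨x, mem_zpowers x⟩) (g' := ⟨y, mem_zpowers y⟩)
    (by rintro ⟨_, k, rfl⟩; exact ⟨k, rfl⟩) (by rintro ⟨_, k, rfl⟩; exact ⟨k, rfl⟩) (by simpa)

theorem coe_zpowersMulEquivOfOrderOfEq_zpow (h : orderOf x = orderOf y) (k : ℤ) :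
    (zpowersMulEquivOfOrderOfEq h (⟨x, mem_zpowers x⟩ ^ k) : H) = y ^ k := by
  simp [zpowersMulEquivOfOrderOfEq]

theorem ofAdd_mem_zpowers_ofAdd_iff {m k : ℤ} : ofAdd k ∈ zpowers (ofAdd m) ↔ m ∣ k :=
  Int.mem_zmultiples_iff

end ZPowers

namespace BS

variable {m n : ℤ}

theorem t_mul_a_zpow (m n : ℤ) : t m n * a m n ^ m = a m n ^ n * t m n := by
  rw [← mul_inv_eq_iff_eq_mul, ← mul_inv_eq_one]
  exact PresentedGroup.one_of_mem (rels := bsRels m n) (Set.mem_singleton _)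

/-- The isomorphism `mℤ ≃ nℤ` sending `m` to `n`, along which `BS(m, n)` is an HNN extension of `ℤ`.
The condition on `m` and `n` says that these subgroups are isomorphic. -/
noncomputable def zpowersEquiv (h : m = 0 ↔ n = 0) :
    zpowers (ofAdd m) ≃* zpowers (ofAdd n) :=
  zpowersMulEquivOfOrderOfEq (orderOf_eq_orderOf_of_eq_one_iff (by simpa using h))

/-- The HNN extension of `ℤ`, written multiplicatively, conjugating `mℤ` to `nℤ`. -/
abbrev HNN (h : m = 0 ↔ n = 0) :=
  HNNExtension (Multiplicative ℤ) (zpowers (ofAdd m)) (zpowers (ofAdd n)) (zpowersEquiv h)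

theorem coe_zpowersEquiv_zpow (h : m = 0 ↔ n = 0) (k : ℤ) :
    (zpowersEquiv h (⟨ofAdd m, mem_zpowers _⟩ ^ k) : Multiplicative ℤ) = ofAdd n ^ k :=
  coe_zpowersMulEquivOfOrderOfEq_zpow _ k

theorem hnn_t_mul_of_zpow (h : m = 0 ↔ n = 0) :
    (HNNExtension.t * of (ofAdd 1) ^ m : HNN h) = of (ofAdd 1) ^ n * HNNExtension.t := by
  have hrel := HNNExtension.t_mul_of (φ := zpowersEquiv h) (⟨ofAdd m, mem_zpowers _⟩ ^ (1 : ℤ))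
  rw [coe_zpowersEquiv_zpow] at hrel
  simpa [← map_zpow, ← ofAdd_zsmul] using hrel

/-- The homomorphism from `BS(m, n)` to the HNN extension, sending `a` to the generator of `ℤ` and
`t` to the stable letter. -/
noncomputable def toHNN (h : m = 0 ↔ n = 0) : BS m n →* HNN h :=
  PresentedGroup.toGroup (f := fun b : Bool => if b then HNNExtension.t else of (ofAdd 1)) <| by
    rintro _ rfl
    simpa [mul_inv_eq_one, mul_inv_eq_iff_eq_mul] using hnn_t_mul_of_zpow h

/-- The inverse of `BS.toHNN`, sending the generator of `ℤ` to `a` and the stable letter to `t`. -/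
noncomputable def ofHNN (h : m = 0 ↔ n = 0) : HNN h →* BS m n :=
  HNNExtension.lift (zpowersHom _ (a m n)) (t m n) <| by
    rintro ⟨_, k, rfl⟩
    have hrel : SemiconjBy (t m n) ((a m n ^ m) ^ k) ((a m n ^ n) ^ k) :=
      SemiconjBy.zpow_right (t_mul_a_zpow m n) k
    change _ = zpowersHom _ (a m n) (zpowersEquiv h (⟨ofAdd m, mem_zpowers _⟩ ^ k)) * _
    rw [coe_zpowersEquiv_zpow]
    simpa [map_zpow] using hrel.eq

theorem toHNN_a (h : m = 0 ↔ n = 0) : toHNN h (a m n) = of (ofAdd 1) :=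
  PresentedGroup.toGroup.of _

theorem toHNN_t (h : m = 0 ↔ n = 0) : toHNN h (t m n) = HNNExtension.t :=
  PresentedGroup.toGroup.of _

theorem ofHNN_of (h : m = 0 ↔ n = 0) (k : ℤ) : ofHNN h (of (ofAdd k)) = a m n ^ k := by
  simp [ofHNN]

theorem ofHNN_t (h : m = 0 ↔ n = 0) : ofHNN h HNNExtension.t = t m n := by
  simp [ofHNN]

/-- `BS(m, n)` as an HNN extension of `⟨a⟩ ≅ ℤ`. -/
noncomputable def equivHNN (h : m = 0 ↔ n = 0) : BS m n ≃* HNN h :=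
  (toHNN h).toMulEquiv (ofHNN h)
    (PresentedGroup.ext <| by
      rintro (_ | _)
      · exact (congrArg _ (toHNN_a h)).trans <| (ofHNN_of h 1).trans <| zpow_one _
      · exact (congrArg _ (toHNN_t h)).trans <| ofHNN_t h)
    (HNNExtension.hom_ext
      (MonoidHom.ext_mint <| by simp [ofHNN_of, toHNN_a])
      (by simp [ofHNN_t, toHNN_t]))

theorem equivHNN_a_zpow (h : m = 0 ↔ n = 0) (k : ℤ) :
    equivHNN h (a m n ^ k) = of (ofAdd k) := by
  rw [← (equivHNN h).apply_symm_apply (of (ofAdd k))]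
  exact congrArg _ (ofHNN_of h k).symm

end BS

theorem free_subgroup_in_subgroup_generated_by_a_and_g_general {m n k : ℤ} (h : m = 0 ↔ n = 0)
    (hm : ¬ m ∣ 2 * k) (hn : ¬ n ∣ 2 * k) {g : BS m n} (hg : g ∉ zpowers (BS.a m n)) :
    ∃ x y : BS m n, x ∈ closure {BS.a m n ^ k, g} ∧ y ∈ closure {BS.a m n ^ k, g} ∧
      FreelyGenerateF2 x y := by
  have hrange : BS.equivHNN h g ∉ (of : Multiplicative ℤ →* BS.HNN h).range := by
    rintro ⟨z, hz⟩
    rw [← ofAdd_toAdd z, ← BS.equivHNN_a_zpow, EmbeddingLike.apply_eq_iff_eq] at hz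
    exact hg ⟨_, hz⟩
  have hc {l : ℤ} (hl : ¬ l ∣ 2 * k) (x : Multiplicative ℤ) :
      x⁻¹ * ofAdd k ^ 2 * x ∉ zpowers (ofAdd l) := by
    rwa [mul_right_comm, inv_mul_cancel, one_mul, ← ofAdd_nsmul, ofAdd_mem_zpowers_ofAdd_iff,
      nsmul_eq_mul, Nat.cast_two]
  obtain ⟨x, hx, y, hy, hxy⟩ :=
    exists_freelyGenerateF2_mem_closure_of_notMem_range_of (hc hm) (hc hn) hrange
  have hclosure : closure {of (ofAdd k), BS.equivHNN h g} =
      (closure {BS.a m n ^ k, g}).map (BS.equivHNN h).toMonoidHom := by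
    simp [MonoidHom.map_closure, Set.image_pair, BS.equivHNN_a_zpow]
  rw [hclosure] at hx hy
  obtain ⟨x, hx, rfl⟩ := hx
  obtain ⟨y, hy, rfl⟩ := hy
  exact ⟨x, y, hx, hy, hxy.of_map⟩

theorem free_subgroup_in_subgroup_generated_by_a_and_g (m n : ℤ) (hm : 3 ≤ |m|) (hn : 3 ≤ |n|)
    (g : BS m n) (hg : g ∉ Subgroup.zpowers (BS.a m n)) :
    ∃ x y : BS m n, x ∈ Subgroup.closure {BS.a m n, g} ∧ y ∈ Subgroup.closure {BS.a m n, g} ∧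
      FreelyGenerateF2 x y := by
  have not_dvd_two {l : ℤ} (hl : 3 ≤ |l|) : ¬ l ∣ 2 * 1 := fun h =>
    absurd (Int.le_of_dvd two_pos ((abs_dvd l 2).2 h)) (by omega)
  simpa using free_subgroup_in_subgroup_generated_by_a_and_g_general (k := 1)
    (by grind) (not_dvd_two hm) (not_dvd_two hn) hg
end

section
/- Let m and n be integers with |m| ≥ 3 and |n| ≥ 3, and let G = BS(m,n) * F₂ be the free product of BS(m,n) with the free group F₂ on two generators. Then the cyclic subgroup of G generated by the image of a (under the canonical inclusion of BS(m,n)) is a maximal amenable subgroup of G. -/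
/-- A left-invariant mean on the bounded real-valued functions on `G` exists:
`G` is amenable. -/
def IsAmenable (G : Type*) [Group G] : Prop :=
  ∃ m : (G → ℝ) → ℝ,
    (∀ f₁ f₂ : G → ℝ, Bornology.IsBounded (Set.range f₁) → Bornology.IsBounded (Set.range f₂) →
      m (f₁ + f₂) = m f₁ + m f₂) ∧
    (∀ (c : ℝ) (f : G → ℝ), Bornology.IsBounded (Set.range f) → m (c • f) = c * m f) ∧
    (∀ f : G → ℝ, Bornology.IsBounded (Set.range f) → (∀ x, 0 ≤ f x) → 0 ≤ m f) ∧
    m (fun _ => 1) = 1 ∧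
    (∀ (g : G) (f : G → ℝ), Bornology.IsBounded (Set.range f) →
      m (fun x => f (g * x)) = m f)

/-- `H` is a maximal amenable subgroup of `G`. -/
def MaximalAmenable {G : Type*} [Group G] (H : Subgroup G) : Prop :=
  IsAmenable H ∧ ∀ K : Subgroup G, IsAmenable K → H ≤ K → K = H
/-!
Write `G` for the free product and `a` for the given element, and view `G` as an iterated HNN
extension of `⟨a⟩` whose stable letters are `t` and the free generators, the latter with trivial
associated subgroups. Let `K` be a subgroup containing `a` and some `g ∉ ⟨a⟩`. In normal form
`g = aⁱ r aʲ` with `r` a reduced word starting and ending with stable letters, and `r ∈ K`.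
Ping-pong on a space of words provides two sets `C` and `D` such that `r` maps the complement of `C`
into `D`, while `C`, `D` are disjoint from their translates under `a` and `a²`, because no edge
index divides `2`. A `K`-invariant finitely additive probability would give `C` and `D` mass at most
`1/3` each, although `C` and `r⁻¹ D` cover the whole space. So `K` is not amenable.

Words need not be reduced for this: a stable letter only has to conjugate one power of the shift by
`a` to another and to map the complement of one cone onto another cone, and such a permutation
exists because the fundamental domains to be matched have the same cardinality.
-/

/-! ### Amenability of cyclic groups -/

section BirkhoffMean

open Filter Topology

variable {X : Type*} (T : X → X) (x : X)

/-- The limit of the Birkhoff averages of `f` along the orbit of `x`, taken along a fixed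
nonprincipal ultrafilter so that it exists for every bounded `f`. -/
noncomputable def birkhoffMean (f : X → ℝ) : ℝ :=
  limUnder (hyperfilter ℕ : Filter ℕ) (birkhoffAverage ℝ T f · x)

variable {f g : X → ℝ}

theorem abs_birkhoffAverage_le {B : ℝ} (hf : ∀ y, |f y| ≤ B) (N : ℕ) :
    |birkhoffAverage ℝ T f N x| ≤ B := by
  rcases N.eq_zero_or_pos with rfl | hN
  · simpa using (abs_nonneg _).trans (hf x)
  · have hsum : |birkhoffSum T f N x| ≤ N * B := by
      simpa [birkhoffSum] using
        (Finset.range N).abs_sum_le_sum_abs (fun i => f (T^[i] x)) |>.trans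
          (Finset.sum_le_sum fun i _ => hf (T^[i] x))
    rwa [birkhoffAverage, smul_eq_mul, abs_mul, abs_of_nonneg (by positivity),
      inv_mul_le_iff₀ (by positivity)]

theorem tendsto_birkhoffMean (hf : Bornology.IsBounded (Set.range f)) :
    Tendsto (birkhoffAverage ℝ T f · x) (hyperfilter ℕ : Filter ℕ) (𝓝 (birkhoffMean T x f)) := by
  obtain ⟨B, hB⟩ := hf.exists_norm_le
  have hmem (N : ℕ) : birkhoffAverage ℝ T f N x ∈ Set.Icc (-B) B :=
    abs_le.mp (abs_birkhoffAverage_le T x (fun y => hB (f y) ⟨y, rfl⟩) N)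
  obtain ⟨l, -, hl⟩ := isCompact_Icc.ultrafilter_le_nhds'
    ((hyperfilter ℕ).map (birkhoffAverage ℝ T f · x)) (mem_map.mpr (univ_mem' hmem))
  exact tendsto_nhds_limUnder ⟨l, hl⟩

theorem birkhoffMean_add (hf : Bornology.IsBounded (Set.range f))
    (hg : Bornology.IsBounded (Set.range g)) :
    birkhoffMean T x (f + g) = birkhoffMean T x f + birkhoffMean T x g :=
  Tendsto.limUnder_eq <| by
    simpa only [birkhoffAverage_add, Pi.add_apply] using
      (tendsto_birkhoffMean T x hf).add (tendsto_birkhoffMean T x hg)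

theorem birkhoffMean_smul (c : ℝ) (hf : Bornology.IsBounded (Set.range f)) :
    birkhoffMean T x (c • f) = c * birkhoffMean T x f := by
  refine Tendsto.limUnder_eq (((tendsto_birkhoffMean T x hf).const_mul c).congr fun N => ?_)
  simp only [birkhoffAverage, birkhoffSum, Pi.smul_apply, smul_eq_mul, ← Finset.mul_sum]
  ring

theorem birkhoffMean_nonneg (hf : Bornology.IsBounded (Set.range f)) (h : ∀ y, 0 ≤ f y) :
    0 ≤ birkhoffMean T x f :=
  ge_of_tendsto' (tendsto_birkhoffMean T x hf) fun _ =>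
    smul_nonneg (by positivity) (Finset.sum_nonneg fun _ _ => h _)

theorem birkhoffMean_one : birkhoffMean T x (fun _ => 1) = 1 := by
  refine Tendsto.limUnder_eq (tendsto_const_nhds.congr' ?_)
  filter_upwards [Nat.hyperfilter_le_atTop (eventually_ne_atTop 0)] with N hN
  rw [birkhoffAverage_of_comp_eq ℝ rfl (Nat.cast_ne_zero.mpr hN)]

theorem birkhoffMean_comp (hf : Bornology.IsBounded (Set.range f)) :
    birkhoffMean T x (f ∘ T) = birkhoffMean T x f := by
  have hshift := (tendsto_birkhoffAverage_apply_sub_birkhoffAverage' ℝ hf T x).mono_left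
    Nat.hyperfilter_le_atTop
  refine Tendsto.limUnder_eq (((tendsto_birkhoffMean T x hf).add hshift).congr' ?_ |>.trans ?_)
  · refine Eventually.of_forall fun N => ?_
    simp only [birkhoffAverage, birkhoffSum, Function.comp_apply, add_sub_cancel,
      ← Function.iterate_succ_apply', ← Function.iterate_succ_apply]
  · simp

theorem isAmenable_of_isCyclic (H : Type*) [Group H] [IsCyclic H] : IsAmenable H := by
  obtain ⟨x, hx⟩ := IsCyclic.exists_generator (α := H)
  refine ⟨birkhoffMean (x * ·) 1, fun _ _ => birkhoffMean_add _ _,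
    fun c _ => birkhoffMean_smul _ _ c, fun _ => birkhoffMean_nonneg _ _,
    birkhoffMean_one _ _, fun g => ?_⟩
  have hshift (y : H) {f : H → ℝ} (hf : Bornology.IsBounded (Set.range f)) :
      Bornology.IsBounded (Set.range fun z => f (y * z)) :=
    hf.subset (Set.range_comp_subset_range (y * ·) f)
  obtain ⟨n, rfl⟩ := hx g
  refine zpow_induction_right (g := x) (P := fun y => ∀ f : H → ℝ,
    Bornology.IsBounded (Set.range f) →
      birkhoffMean (x * ·) 1 (fun z => f (y * z)) = birkhoffMean (x * ·) 1 f)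
    (by simp) (fun y ih f hf => ?_) (fun y ih f hf => ?_) n
  · rw [← ih f hf, ← birkhoffMean_comp (x * ·) 1 (hshift y hf)]
    simp only [Function.comp_def, mul_assoc]
  · rw [← ih f hf, ← birkhoffMean_comp (x * ·) 1 (hshift (y * x⁻¹) hf)]
    simp only [Function.comp_def, mul_assoc, inv_mul_cancel_left]

end BirkhoffMean

/-! ### Invariant finitely additive probabilities -/

section InvariantProbability

variable {K S ι : Type*} [Group K] [MulAction K S]

/-- `μ` is a finitely additive probability defined on all subsets of `S` and invariant under the
action of `K`, with real values so that no measurability enters. -/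
structure IsInvariantProbability (K : Type*) {S : Type*} [SMul K S] (μ : Set S → ℝ) : Prop where
  nonneg (A : Set S) : 0 ≤ μ A
  univ : μ Set.univ = 1
  union {A B : Set S} (h : Disjoint A B) : μ (A ∪ B) = μ A + μ B
  preimage_smul (g : K) (A : Set S) : μ ((g • ·) ⁻¹' A) = μ A

theorem IsAmenable.exists_isInvariantProbability [Nonempty S] (hK : IsAmenable K) :
    ∃ μ : Set S → ℝ, IsInvariantProbability K μ := by
  obtain ⟨m, hadd, -, hnonneg, hone, hinv⟩ := hK
  obtain ⟨s⟩ := ‹Nonempty S›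
  let F (A : Set S) (x : K) : ℝ := A.indicator 1 (x • s)
  have hF_mem (A : Set S) (x : K) : F A x ∈ Set.Icc 0 1 :=
    ⟨Set.indicator_nonneg (fun _ _ => zero_le_one) _,
      Set.indicator_le_self' (fun _ _ => zero_le_one) _⟩
  have hF_bdd (A : Set S) : Bornology.IsBounded (Set.range (F A)) :=
    (Metric.isBounded_Icc 0 1).subset (Set.range_subset_iff.mpr (hF_mem A))
  refine ⟨fun A => m (F A), fun A => hnonneg _ (hF_bdd A) fun x => (hF_mem A x).1, ?_, ?_, ?_⟩
  · simpa [F] using hone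
  · intro A B hAB
    rw [← hadd _ _ (hF_bdd A) (hF_bdd B)]
    exact congrArg m (funext fun x => congrFun (Set.indicator_union_of_disjoint hAB 1) (x • s))
  · intro g A
    rw [← hinv g _ (hF_bdd A)]
    simp only [F, mul_smul]
    rfl

namespace IsInvariantProbability

variable {μ : Set S → ℝ}

theorem mono (hμ : IsInvariantProbability K μ) {A B : Set S} (h : A ⊆ B) : μ A ≤ μ B := by
  have hB := hμ.union (Set.disjoint_sdiff_right (s := A) (t := B))
  rw [Set.union_sdiff_cancel h] at hB
  linarith [hμ.nonneg (B \ A)]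

theorem union_le (hμ : IsInvariantProbability K μ) (A B : Set S) : μ (A ∪ B) ≤ μ A + μ B := by
  rw [← Set.union_sdiff_self, hμ.union Set.disjoint_sdiff_right]
  linarith [hμ.mono (Set.sdiff_subset (s := B) (t := A))]

theorem biUnion (hμ : IsInvariantProbability K μ) (s : Finset ι) {A : ι → Set S}
    (hA : (s : Set ι).PairwiseDisjoint A) : μ (⋃ i ∈ s, A i) = ∑ i ∈ s, μ (A i) := by
  classical
  induction s using Finset.induction_on with
  | empty => simpa using hμ.union (Set.disjoint_empty ∅)
  | insert i s hi ih =>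
    rw [Finset.coe_insert, Set.pairwiseDisjoint_insert_of_notMem (by simpa using hi)] at hA
    have hdisj : Disjoint (A i) (⋃ j ∈ s, A j) := Set.disjoint_iUnion₂_right.mpr hA.2
    rw [Finset.set_biUnion_insert, hμ.union hdisj, ih hA.1, Finset.sum_insert hi]

theorem card_mul_le_one (hμ : IsInvariantProbability K μ) {s : Finset ι} {g : ι → K} {A : Set S}
    (hA : (s : Set ι).PairwiseDisjoint fun i => (g i • ·) ⁻¹' A) : s.card * μ A ≤ 1 :=
  calc s.card * μ A = μ (⋃ i ∈ s, (g i • ·) ⁻¹' A) := by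
        simp [hμ.biUnion s hA, hμ.preimage_smul]
    _ ≤ 1 := hμ.univ ▸ hμ.mono (Set.subset_univ _)

end IsInvariantProbability

theorem not_isAmenable_of_pairwiseDisjoint [Nonempty S] {s : Finset ι} (hs : 2 < s.card)
    {x : ι → K} {g : K} {C D : Set S}
    (hC : (s : Set ι).PairwiseDisjoint fun i => (x i • ·) ⁻¹' C)
    (hD : (s : Set ι).PairwiseDisjoint fun i => (x i • ·) ⁻¹' D)
    (hCD : ∀ w ∉ C, g • w ∈ D) : ¬ IsAmenable K := by
  intro hK
  obtain ⟨μ, hμ⟩ := hK.exists_isInvariantProbability (S := S)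
  have hcover : C ∪ (g • ·) ⁻¹' D = Set.univ :=
    Set.eq_univ_of_forall fun w => or_iff_not_imp_left.mpr (hCD w)
  have hCD_mass : 1 ≤ μ C + μ D := by
    simpa only [hcover, hμ.univ, hμ.preimage_smul] using hμ.union_le C ((g • ·) ⁻¹' D)
  have hs' : (2 : ℝ) < s.card := mod_cast hs
  nlinarith [hμ.card_mul_le_one hC, hμ.card_mul_le_one hD]

end InvariantProbability

/-! ### Normal forms in HNN extensions of a cyclic group -/

/-- A stable letter with a sign: `(j, true)` stands for `t j` and `(j, false)` for `(t j)⁻¹`. -/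
abbrev SignedLetter (J : Type*) := J × Bool

namespace SignedLetter

variable {J G : Type*} [Group G]

/-- The formal inverse of a signed letter. -/
def inv (e : SignedLetter J) : SignedLetter J := (e.1, !e.2)

/-- The group element denoted by a signed letter, when `j` is interpreted as `t j`. -/
def eval (t : J → G) (e : SignedLetter J) : G := cond e.2 (t e.1) (t e.1)⁻¹

theorem eval_mul_eval_inv (t : J → G) (e : SignedLetter J) : e.eval t * e.inv.eval t = 1 := by
  rcases e with ⟨j, _ | _⟩ <;> simp [eval, inv]

theorem map_eval {P : Type*} [Group P] (φ : G →* P) (t : J → G) (e : SignedLetter J) :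
    φ (e.eval t) = e.eval (φ ∘ t) := by
  rcases e with ⟨j, _ | _⟩ <;> simp [eval]

theorem semiconjBy_eval {a : G} {t : J → G} {k : SignedLetter J → ℤ}
    (hrel : ∀ j, SemiconjBy (t j) (a ^ k (j, false)) (a ^ k (j, true))) (e : SignedLetter J) :
    SemiconjBy (e.eval t) (a ^ k e.inv) (a ^ k e) := by
  rcases e with ⟨j, _ | _⟩
  · exact SemiconjBy.inv_symm_left_iff.mpr (hrel j)
  · exact hrel j

end SignedLetter

section NormalForm

variable {G J : Type*} [Group G] (a : G) (t : J → G) (k : SignedLetter J → ℤ)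

/-- `IsReducedProd a t k e g`: the element `g` is the product of a reduced word
`e₀ a^{i₁} e₁ ⋯ a^{iₙ} eₙ` in signed letters with first letter `e₀ = e`. As `k e` is the index of
the subgroup of `⟨a⟩` associated to `e`, a subword `e a^i e⁻¹` is admitted only if `k e⁻¹ ∤ i`. -/
inductive IsReducedProd : SignedLetter J → G → Prop
  | letter (e : SignedLetter J) : IsReducedProd e (e.eval t)
  | cons (e d : SignedLetter J) (i : ℤ) (g : G) (hg : IsReducedProd d g)
      (hi : ¬(d = e.inv ∧ k d ∣ i)) : IsReducedProd e (e.eval t * a ^ i * g)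

/-- `g` is a power of `a` or of the form `a^i * r * a^j` with `r` the product of a reduced word. -/
def HasNormalForm (g : G) : Prop :=
  g ∈ Subgroup.zpowers a ∨
    ∃ (i j : ℤ) (e : SignedLetter J) (r : G), IsReducedProd a t k e r ∧ g = a ^ i * r * a ^ j

variable {a t k} {g : G}

theorem HasNormalForm.zpow_mul (hg : HasNormalForm a t k g) (n : ℤ) :
    HasNormalForm a t k (a ^ n * g) := by
  rcases hg with hg | ⟨i, j, e, r, hr, rfl⟩
  · exact .inl (mul_mem (Subgroup.zpow_mem_zpowers a n) hg)
  · exact .inr ⟨n + i, j, e, r, hr, by simp only [zpow_add, mul_assoc]⟩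

theorem IsReducedProd.hasNormalForm_eval_inv_mul {e : SignedLetter J} {r : G}
    (hr : IsReducedProd a t k e.inv r) (j : ℤ) : HasNormalForm a t k (e.eval t * r * a ^ j) := by
  generalize hd : e.inv = d at hr
  cases hr with
  | letter =>
    rw [← hd, e.eval_mul_eval_inv, one_mul]
    exact .inl (Subgroup.zpow_mem_zpowers a j)
  | cons _ d i g hg =>
    refine .inr ⟨i, j, d, g, hg, ?_⟩
    rw [← hd, ← mul_assoc, ← mul_assoc, e.eval_mul_eval_inv, one_mul]

theorem HasNormalForm.eval_mul
    (hrel : ∀ j, SemiconjBy (t j) (a ^ k (j, false)) (a ^ k (j, true)))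
    (hg : HasNormalForm a t k g) (e : SignedLetter J) : HasNormalForm a t k (e.eval t * g) := by
  rcases hg with ⟨j, rfl⟩ | ⟨i, j, d, r, hr, rfl⟩
  · exact .inr ⟨0, j, e, _, .letter e, by simp⟩
  by_cases hcancel : d = e.inv ∧ k d ∣ i
  · obtain ⟨rfl, c, rfl⟩ := hcancel
    have hpush : e.eval t * a ^ (k e.inv * c) = a ^ (k e * c) * e.eval t := by
      simpa only [_root_.zpow_mul] using
        ((SignedLetter.semiconjBy_eval hrel e).zpow_right c).eq
    rw [← mul_assoc, ← mul_assoc, hpush, mul_assoc, mul_assoc, ← mul_assoc (e.eval t)]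
    exact (hr.hasNormalForm_eval_inv_mul j).zpow_mul _
  · exact .inr ⟨0, j, e, _, .cons e d i r hr hcancel, by simp [mul_assoc]⟩

theorem hasNormalForm_of_closure_eq_top
    (hgen : Subgroup.closure (insert a (Set.range t)) = ⊤)
    (hrel : ∀ j, SemiconjBy (t j) (a ^ k (j, false)) (a ^ k (j, true))) (g : G) :
    HasNormalForm a t k g := by
  have hg : g ∈ Subgroup.closure (insert a (Set.range t)) := hgen ▸ Subgroup.mem_top g
  induction hg using Subgroup.closure_induction_left with
  | one => exact .inl (one_mem _)
  | mul_left x hx y _ ih =>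
    rcases hx with rfl | ⟨j, rfl⟩
    · simpa using ih.zpow_mul 1
    · exact ih.eval_mul hrel (j, true)
  | inv_mul_cancel x hx y _ ih =>
    rcases hx with rfl | ⟨j, rfl⟩
    · simpa using ih.zpow_mul (-1)
    · exact ih.eval_mul hrel (j, false)

end NormalForm

/-! ### Ping-pong -/

section PingPong

variable {G J S : Type*} [Group G] [MulAction G S]

/-- Ping-pong data for an HNN extension of `⟨a⟩`: the set `U e` plays the role of the points of the
boundary of the Bass–Serre tree lying behind the edge `e`, and `k e` is the index of the stabilizer
of that edge in `⟨a⟩`. -/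
structure IsPingPong (a : G) (t : J → G) (k : SignedLetter J → ℤ) (U : SignedLetter J → Set S) :
    Prop where
  eq_and_dvd {e d : SignedLetter J} {i : ℤ} {w : S} (hw : w ∈ U e) (hiw : a ^ i • w ∈ U d) :
    e = d ∧ k e ∣ i
  eval_smul_mem (e : SignedLetter J) {w : S} (hw : w ∉ U e.inv) : e.eval t • w ∈ U e

variable {a : G} {t : J → G} {k : SignedLetter J → ℤ} {U : SignedLetter J → Set S}

theorem IsPingPong.of_monoidHom {P : Type*} [Group P] [MulAction P S] (φ : G →* P)
    (hφ : ∀ (g : G) (w : S), g • w = φ g • w) (hU : IsPingPong (φ a) (φ ∘ t) k U) :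
    IsPingPong a t k U where
  eq_and_dvd hw hiw := hU.eq_and_dvd hw (by rwa [← map_zpow, ← hφ])
  eval_smul_mem e w hw := by
    rw [hφ, SignedLetter.map_eval]
    exact hU.eval_smul_mem e hw

theorem IsPingPong.exists_smul_mem (hU : IsPingPong a t k U) {e : SignedLetter J} {g : G}
    (hg : IsReducedProd a t k e g) : ∃ d, ∀ w ∉ U d, g • w ∈ U e := by
  induction hg with
  | letter e => exact ⟨e.inv, fun w hw => hU.eval_smul_mem e hw⟩
  | cons e d i g _ hi ih =>
    obtain ⟨c, hc⟩ := ih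
    refine ⟨c, fun w hw => ?_⟩
    rw [mul_smul, mul_smul]
    refine hU.eval_smul_mem e fun hmem => hi ?_
    obtain ⟨rfl, hdvd⟩ := hU.eq_and_dvd (hc w hw) hmem
    exact ⟨rfl, hdvd⟩

theorem IsPingPong.pairwiseDisjoint_preimage (hU : IsPingPong a t k U) {e : SignedLetter J}
    (he : ¬ k e ∣ 2) :
    (Finset.range 3 : Set ℕ).PairwiseDisjoint fun i => (a ^ i • · : S → S) ⁻¹' U e := by
  intro i hi j hj hij
  refine Set.disjoint_left.mpr fun w hiw hjw => he ?_
  have hdvd : k e ∣ (j - i : ℤ) := by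
    refine (hU.eq_and_dvd (d := e) hiw ?_).2
    rwa [← mul_smul, ← zpow_natCast, ← zpow_add, sub_add_cancel, zpow_natCast]
  refine hdvd.trans ?_
  simp only [Finset.coe_range, Set.mem_Iio] at hi hj
  interval_cases i <;> interval_cases j <;> simp at hij ⊢

theorem maximalAmenable_zpowers_of_isPingPong [Nonempty S]
    (hgen : Subgroup.closure (insert a (Set.range t)) = ⊤)
    (hrel : ∀ j, SemiconjBy (t j) (a ^ k (j, false)) (a ^ k (j, true)))
    (hk : ∀ e, ¬ k e ∣ 2) (hU : IsPingPong a t k U) :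
    MaximalAmenable (Subgroup.zpowers a) := by
  refine ⟨isAmenable_of_isCyclic _, fun K hK haK => le_antisymm (fun g hg => ?_) haK⟩
  have ha : a ∈ K := haK (Subgroup.mem_zpowers a)
  rcases hasNormalForm_of_closure_eq_top hgen hrel g with hg' | ⟨i, j, e, r, hr, rfl⟩
  · exact hg'
  · have hrK : r ∈ K := by
      rwa [K.mul_mem_cancel_right (zpow_mem ha j), K.mul_mem_cancel_left (zpow_mem ha i)] at hg
    obtain ⟨d, hd⟩ := hU.exists_smul_mem hr
    exact absurd hK (not_isAmenable_of_pairwiseDisjoint (S := S) (s := Finset.range 3) (by simp)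
      (x := fun i => (⟨a, ha⟩ : K) ^ i) (g := ⟨r, hrK⟩)
      (hU.pairwiseDisjoint_preimage (hk d)) (hU.pairwiseDisjoint_preimage (hk e)) hd)

end PingPong

/-! ### A space of words to play on -/

section Semiconj

variable {X Y : Type*}

/-- If `r` increases by `1` along `σ`, then `{x // r x = 0}` meets every `σ`-orbit exactly once, and
a point is determined by its value under `r` and this representative of its orbit. -/
def equivIntProdFiber (σ : Equiv.Perm X) (r : X → ℤ) (hr : ∀ (i : ℤ) x, r ((σ ^ i) x) = r x + i) :
    X ≃ ℤ × {x // r x = 0} where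
  toFun x := (r x, ⟨(σ ^ (-r x)) x, (hr _ _).trans (add_neg_cancel _)⟩)
  invFun p := (σ ^ p.1) p.2
  left_inv x := by simp
  right_inv := by
    rintro ⟨i, x, hx⟩
    simp [hr, hx]

theorem equivIntProdFiber_apply_perm (σ : Equiv.Perm X) (r : X → ℤ)
    (hr : ∀ (i : ℤ) x, r ((σ ^ i) x) = r x + i) (x : X) :
    equivIntProdFiber σ r hr (σ x) = (r x + 1, (equivIntProdFiber σ r hr x).2) := by
  have hr_one : r (σ x) = r x + 1 := by simpa using hr 1 x
  refine Prod.ext hr_one (Subtype.ext ?_)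
  change (σ ^ (-r (σ x))) (σ x) = (σ ^ (-r x)) x
  rw [hr_one, ← Equiv.Perm.mul_apply, ← zpow_add_one, neg_add, neg_add_cancel_right]

theorem exists_perm_semiconjBy {σ ρ : Equiv.Perm X} {r s : X → ℤ}
    (hr : ∀ (i : ℤ) x, r ((σ ^ i) x) = r x + i) (hs : ∀ (i : ℤ) x, s ((ρ ^ i) x) = s x + i)
    {A B : Set X} (hA : ∀ (i : ℤ) x, (σ ^ i) x ∈ A ↔ x ∈ A)
    (hB : ∀ (i : ℤ) x, (ρ ^ i) x ∈ B ↔ x ∈ B)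
    (E : {x // r x = 0} ≃ {x // s x = 0}) (hE : ∀ x, (E x : X) ∈ B ↔ (x : X) ∈ A) :
    ∃ τ : Equiv.Perm X, SemiconjBy τ σ ρ ∧ ∀ x, τ x ∈ B ↔ x ∈ A := by
  refine ⟨(equivIntProdFiber σ r hr).trans
    (((Equiv.refl ℤ).prodCongr E).trans (equivIntProdFiber ρ s hs).symm), ?_, fun x => ?_⟩
  · ext x
    simp only [Equiv.Perm.mul_apply, Equiv.trans_apply, equivIntProdFiber_apply_perm,
      Equiv.prodCongr_apply, Prod.map_apply, Equiv.refl_apply]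
    exact DFunLike.congr_fun (mul_self_zpow ρ (r x)).symm _
  · simp only [equivIntProdFiber, Equiv.trans_apply, Equiv.coe_fn_mk, Equiv.coe_fn_symm_mk,
      Equiv.prodCongr_apply, Prod.map_apply, hB, hE, hA]

theorem exists_equiv_mem_iff {A : Set X} {B : Set Y} (hAB : Nonempty (A ≃ B))
    (hAB' : Nonempty (↥Aᶜ ≃ ↥Bᶜ)) : ∃ E : X ≃ Y, ∀ x, E x ∈ B ↔ x ∈ A := by
  classical
  obtain ⟨f⟩ := hAB
  obtain ⟨g⟩ := hAB'
  refine ⟨(Equiv.Set.sumCompl A).symm.trans ((f.sumCongr g).trans (Equiv.Set.sumCompl B)), ?_⟩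
  intro x
  obtain ⟨y | y, rfl⟩ := (Equiv.Set.sumCompl A).surjective x
  · simp
  · simpa using iff_of_false (g y).2 y.2

end Semiconj

section WordSpace

/-- Nonempty words `a^i e a^{i₁} e₁ ⋯ a^{iₙ} eₙ`, split into the leading exponent `i`, the leading
letter `e` and the rest. -/
abbrev WordSpace (J : Type*) := ℤ × SignedLetter J × List (ℤ × SignedLetter J)

namespace WordSpace

variable {J : Type*}

/-- Left multiplication of words by `a`. -/
def shift : Equiv.Perm (WordSpace J) := (Equiv.addRight 1).prodCongr (Equiv.refl _)

@[simp]
theorem shift_zpow_apply (i : ℤ) (w : WordSpace J) : (shift ^ i) w = (w.1 + i, w.2) := by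
  induction i generalizing w with
  | zero => simp
  | succ i ih =>
    rw [zpow_add_one, Equiv.Perm.mul_apply, ih]
    exact Prod.ext ((add_right_comm ..).trans (add_assoc ..)) rfl
  | pred i ih =>
    rw [zpow_sub_one, Equiv.Perm.mul_apply, ih]
    exact Prod.ext ((add_right_comm ..).trans (add_assoc ..)) rfl

/-- The words with prefix `a^i e`, where `i` is a multiple of the index `k e`. -/
def cone (k : SignedLetter J → ℤ) (e : SignedLetter J) : Set (WordSpace J) :=
  {w | w.2.1 = e ∧ k e ∣ w.1}

theorem nonempty_equiv_list {A : Type*} {f : A → WordSpace J} (hf : f.Injective)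
    {g : List (ℤ × SignedLetter J) → A} (hg : g.Injective) :
    Nonempty (A ≃ List (ℤ × SignedLetter J)) := by
  have hcons : Function.Injective fun w : WordSpace J => (w.1, w.2.1) :: w.2.2 := by
    rintro ⟨i, e, l⟩ ⟨i', e', l'⟩ h
    simpa [and_assoc] using h
  exact Function.Embedding.antisymm ⟨_, hcons.comp hf⟩ ⟨g, hg⟩

-- As `i / 0 = 0`, the set `{w // w.1 / p = 0}` is the whole space when `p = 0`.
theorem exists_equiv_fiber_div {A B : Set (WordSpace J)} {e d : SignedLetter J}
    (heA : ∀ l, (0, e, l) ∈ A) (heB : ∀ l, (0, e, l) ∈ B)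
    (hdA : ∀ l, (0, d, l) ∉ A) (hdB : ∀ l, (0, d, l) ∉ B) (p q : ℤ) :
    ∃ E : {w : WordSpace J // w.1 / p = 0} ≃ {w : WordSpace J // w.1 / q = 0},
      ∀ w, (E w : WordSpace J) ∈ B ↔ (w : WordSpace J) ∈ A := by
  have hlist (C : Set (WordSpace J)) (c : SignedLetter J) (hc : ∀ l, (0, c, l) ∈ C) (n : ℤ) :
      Nonempty ((Subtype.val : {w : WordSpace J // w.1 / n = 0} → WordSpace J) ⁻¹' C ≃
        List (ℤ × SignedLetter J)) :=
    nonempty_equiv_list (Subtype.val_injective.comp Subtype.val_injective)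
      (g := fun l => ⟨⟨(0, c, l), Int.zero_ediv n⟩, hc l⟩) fun l l' h => by simpa using h
  have hAB (C D : Set (WordSpace J)) (c : SignedLetter J) (hC : ∀ l, (0, c, l) ∈ C)
      (hD : ∀ l, (0, c, l) ∈ D) :
      Nonempty ((Subtype.val : {w : WordSpace J // w.1 / p = 0} → WordSpace J) ⁻¹' C ≃
        (Subtype.val : {w : WordSpace J // w.1 / q = 0} → WordSpace J) ⁻¹' D) :=
    (hlist C c hC p).elim fun f => (hlist D c hD q).map fun g => f.trans g.symm
  exact exists_equiv_mem_iff (hAB A B e heA heB) (hAB Aᶜ Bᶜ d hdA hdB)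

theorem exists_perm_cone {k : SignedLetter J → ℤ} (e : SignedLetter J)
    (hk : k e.inv = 0 ↔ k e = 0) :
    ∃ τ : Equiv.Perm (WordSpace J), SemiconjBy τ (shift ^ k e.inv) (shift ^ k e) ∧
      ∀ w, τ w ∈ cone k e ↔ w ∉ cone k e.inv := by
  have hne : e ≠ e.inv := fun h => by simpa [SignedLetter.inv] using congrArg Prod.snd h
  obtain ⟨E, hE⟩ := exists_equiv_fiber_div (A := (cone k e.inv)ᶜ) (B := cone k e) (e := e)
    (d := e.inv) (by simp [cone, hne]) (by simp [cone]) (by simp [cone]) (by simp [cone, hne.symm])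
    (k e.inv) (k e)
  by_cases he : k e = 0
  · have hfiber {n : ℤ} (hn : n = 0) (w : WordSpace J) : w.1 / n = 0 := by
      rw [hn, Int.ediv_zero]
    refine ⟨(Equiv.subtypeUnivEquiv (hfiber (hk.mpr he))).symm.trans
      (E.trans (Equiv.subtypeUnivEquiv (hfiber he))), ?_, fun w => hE _⟩
    simp only [hk.mpr he, he, zpow_zero, SemiconjBy.one_right]
  · have he' : k e.inv ≠ 0 := hk.not.mpr he
    have hcone (i : ℤ) (d : SignedLetter J) (w : WordSpace J) :
        ((shift ^ k d) ^ i) w ∈ cone k d ↔ w ∈ cone k d := by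
      simp [← zpow_mul, cone]
    exact exists_perm_semiconjBy (r := fun w => w.1 / k e.inv) (s := fun w => w.1 / k e)
      (fun i w => by simp [← zpow_mul, Int.add_mul_ediv_left _ _ he'])
      (fun i w => by simp [← zpow_mul, Int.add_mul_ediv_left _ _ he])
      (fun i w => (hcone i e.inv w).not) (fun i w => hcone i e w) E hE

theorem exists_isPingPong {k : SignedLetter J → ℤ}
    (hk : ∀ j, k (j, false) = 0 ↔ k (j, true) = 0) :
    ∃ τ : J → Equiv.Perm (WordSpace J),
      (∀ j, SemiconjBy (τ j) (shift ^ k (j, false)) (shift ^ k (j, true))) ∧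
      IsPingPong shift τ k (cone k) := by
  choose τ hτ_rel hτ_mem using fun j => exists_perm_cone (j, true) (hk j)
  refine ⟨τ, hτ_rel, ⟨?_, ?_⟩⟩
  · rintro e d i w ⟨rfl, hw⟩ hiw
    rw [Equiv.Perm.smul_def, shift_zpow_apply] at hiw
    obtain ⟨rfl, hdvd⟩ := hiw
    exact ⟨rfl, (Int.dvd_add_right hw).mp hdvd⟩
  · rintro ⟨j, _ | _⟩ w hw
    · have hmem := hτ_mem j ((τ j)⁻¹ w)
      rw [Equiv.Perm.inv_def, Equiv.apply_symm_apply] at hmem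
      exact not_not.mp (hmem.not.mp hw)
    · exact (hτ_mem j w).mpr hw

end WordSpace

end WordSpace

/-! ### The free product of a Baumslag–Solitar group and a free group -/

namespace BS

theorem semiconjBy_t (m n : ℤ) : SemiconjBy (t m n) (a m n ^ m) (a m n ^ n) := by
  have hrel : t m n * a m n ^ m * (t m n)⁻¹ * (a m n ^ n)⁻¹ = 1 :=
    PresentedGroup.one_of_mem (rels := bsRels m n) rfl
  rwa [mul_inv_eq_one, mul_inv_eq_iff_eq_mul] at hrel

variable (m n : ℤ) (α : Type*)

/-- The stable letters of `BS m n * FreeGroup α`, as an HNN extension of `⟨a⟩`: the letter `t`, at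
index `none`, and the free generators. -/
def stableLetter : Option α → Monoid.Coprod (BS m n) (FreeGroup α)
  | none => Monoid.Coprod.inl (t m n)
  | some x => Monoid.Coprod.inr (FreeGroup.of x)

variable {α}

/-- The indices of the associated subgroups of the stable letters, where `0` encodes the trivial
subgroup of `ℤ`: `t` conjugates `⟨a ^ m⟩` to `⟨a ^ n⟩`, and a free generator satisfies no
relation. -/
def edgeIndex : SignedLetter (Option α) → ℤ
  | (none, false) => m
  | (none, true) => n
  | (some _, _) => 0

variable (α)

theorem semiconjBy_stableLetter (j : Option α) :
    SemiconjBy (stableLetter m n α j) (Monoid.Coprod.inl (a m n) ^ edgeIndex m n (j, false))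
      (Monoid.Coprod.inl (a m n) ^ edgeIndex m n (j, true)) := by
  cases j with
  | none =>
    simpa [stableLetter, edgeIndex] using
      (semiconjBy_t m n).map (Monoid.Coprod.inl : BS m n →* Monoid.Coprod (BS m n) (FreeGroup α))
  | some x => simp [edgeIndex]

theorem closure_insert_range_stableLetter :
    Subgroup.closure (insert (Monoid.Coprod.inl (a m n)) (Set.range (stableLetter m n α))) = ⊤ := by
  rw [eq_top_iff, ← Monoid.Coprod.range_inl_sup_range_inr, sup_le_iff]
  constructor
  · rw [MonoidHom.range_eq_map, ← PresentedGroup.closure_range_of, MonoidHom.map_closure]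
    refine Subgroup.closure_mono ?_
    rintro _ ⟨_, ⟨_ | _, rfl⟩, rfl⟩
    · exact .inl rfl
    · exact .inr ⟨none, rfl⟩
  · rw [MonoidHom.range_eq_map, ← FreeGroup.closure_range_of, MonoidHom.map_closure]
    refine Subgroup.closure_mono ?_
    rintro _ ⟨_, ⟨x, rfl⟩, rfl⟩
    exact .inr ⟨some x, rfl⟩

variable {m n α}

theorem exists_lift {P : Type*} [Group P] {x : P} {y : Option α → P}
    (h : SemiconjBy (y none) (x ^ m) (x ^ n)) :
    ∃ φ : Monoid.Coprod (BS m n) (FreeGroup α) →* P,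
      φ (Monoid.Coprod.inl (a m n)) = x ∧ φ ∘ stableLetter m n α = y := by
  have hrels : ∀ r ∈ bsRels m n, FreeGroup.lift (fun b => cond b (y none) x) r = 1 := by
    rintro _ rfl
    simp [h.eq]
  refine ⟨Monoid.Coprod.lift (PresentedGroup.toGroup hrels) (FreeGroup.lift fun i => y (some i)),
    by simp [a], ?_⟩
  funext j
  cases j <;> simp [stableLetter, t]

end BS

theorem maximal_amenable_cyclic_in_BS_free_product_F2_general (α : Type*) {m n : ℤ}
    (hmn : m = 0 ↔ n = 0) (hm : ¬ m ∣ 2) (hn : ¬ n ∣ 2) :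
    MaximalAmenable
      (Subgroup.zpowers
        ((Monoid.Coprod.inl : BS m n →* Monoid.Coprod (BS m n) (FreeGroup α)) (BS.a m n))) := by
  obtain ⟨τ, hτ, hU⟩ := WordSpace.exists_isPingPong (k := BS.edgeIndex (α := α) m n) <| by
    rintro (_ | _) <;> simp [BS.edgeIndex, hmn]
  obtain ⟨φ, hφa, hφt⟩ := BS.exists_lift (hτ none)
  let _ : MulAction (Monoid.Coprod (BS m n) (FreeGroup α)) (WordSpace (Option α)) :=
    MulAction.compHom _ φ
  refine maximalAmenable_zpowers_of_isPingPong (BS.closure_insert_range_stableLetter m n α)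
    (BS.semiconjBy_stableLetter m n α) ?_ (U := WordSpace.cone (BS.edgeIndex m n)) ?_
  · rintro ⟨_ | _, _ | _⟩ <;> simp [BS.edgeIndex, hm, hn]
  · exact IsPingPong.of_monoidHom φ (fun _ _ => rfl) (hφa ▸ hφt ▸ hU)

theorem maximal_amenable_cyclic_in_BS_free_product_F2 (m n : ℤ) (hm : 3 ≤ |m|) (hn : 3 ≤ |n|) :
    MaximalAmenable
      (Subgroup.zpowers
        ((Monoid.Coprod.inl : BS m n →* Monoid.Coprod (BS m n) (FreeGroup Bool))
          (BS.a m n))) := by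
  have not_dvd_two {k : ℤ} (hk : 3 ≤ |k|) : ¬ k ∣ 2 := fun h => by
    have := Int.le_of_dvd two_pos ((abs_dvd k 2).mpr h)
    omega
  exact maximal_amenable_cyclic_in_BS_free_product_F2_general Bool
    (iff_of_false (by rintro rfl; simp at hm) (by rintro rfl; simp at hn))
    (not_dvd_two hm) (not_dvd_two hn)
end
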